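/- Let R be the quotient of ℂ⟨e1,e2,e3⟩ by the two-sided ideal generated by e1e2 + e2e1 − e3, e1e3 + e3e1, e2e3 − e3e2, e2², and e3². Then h_0 = 1 and h_n = 2 for every n ≥ 1; equivalently, the Poincaré series Σ_{n≥0} h_n z^n equals (1+z)/(1−z). -/

import Mathlib

open CategoryTheory FreeAlgebra

/-- `Ext^m_R(ℂ,ℂ)` as a ℂ-module, where `ℂ` is an `R`-module via the augmentation `ε`. -/
noncomputable def extC (R : Type) [Ring R] [Algebra ℂ R] (ε : R →ₐ[ℂ] ℂ) (m : ℕ) :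
    ModuleCat ℂ :=
  letI : Module R ℂ := Module.compHom ℂ ε.toRingHom
  ((Ext ℂ (ModuleCat R) m).obj (Opposite.op (ModuleCat.of R ℂ))).obj (ModuleCat.of R ℂ)

/-- `h_m = dim_ℂ Ext^m_R(ℂ,ℂ)`. -/
noncomputable def extDim (R : Type) [Ring R] [Algebra ℂ R] (ε : R →ₐ[ℂ] ℂ) (m : ℕ) : ℕ :=
  Module.finrank ℂ (extC R ε m)

/-- Relations: `e1e2 + e2e1 = e3`, `e1e3 + e3e1 = 0`, `e2e3 - e3e2 = 0`, `e2² = 0`, `e3² = 0`. -/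
inductive CRel : FreeAlgebra ℂ (Fin 3) → FreeAlgebra ℂ (Fin 3) → Prop
  | r12 : CRel (ι ℂ 0 * ι ℂ 1 + ι ℂ 1 * ι ℂ 0) (ι ℂ 2)
  | r13 : CRel (ι ℂ 0 * ι ℂ 2 + ι ℂ 2 * ι ℂ 0) 0
  | r23 : CRel (ι ℂ 1 * ι ℂ 2 - ι ℂ 2 * ι ℂ 1) 0
  | r22 : CRel (ι ℂ 1 * ι ℂ 1) 0
  | r33 : CRel (ι ℂ 2 * ι ℂ 2) 0


theorem ext_of_minimal {R : Type} [Ring R] [Algebra ℂ R] (Z : ModuleCat.{0} R)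
    (X : ℕ → ModuleCat.{0} R) (hproj : ∀ n, Projective (X n))
    (d : ∀ n, X (n + 1) ⟶ X n) (p : X 0 ⟶ Z)
    (hp : Function.Surjective p)
    (h0 : Function.Exact (d 0) p)
    (hex : ∀ n, Function.Exact (d (n + 1)) (d n))
    (hz : ∀ n (f : X n ⟶ Z), d n ≫ f = 0) (m : ℕ) :
    Nonempty (((Ext ℂ (ModuleCat R) m).obj (Opposite.op Z)).obj Z ≅
      ModuleCat.of ℂ (X m ⟶ Z)) := by
  have sq : ∀ n, d (n + 1) ≫ d n = 0 := fun n => by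
    ext x
    exact (hex n).apply_apply_eq_zero x
  have sq0 : d 0 ≫ p = 0 := by
    ext x
    exact h0.apply_apply_eq_zero x
  let K : ChainComplex (ModuleCat.{0} R) ℕ := ChainComplex.of X d sq
  have hK : ∀ n, K.d (n + 1) n = d n := fun n => ChainComplex.of_d X d n
  let π : K ⟶ (ChainComplex.single₀ _).obj Z :=
    (K.toSingle₀Equiv Z).symm ⟨p, by rw [hK]; exact sq0⟩
  have hπ : QuasiIso π := by
    constructor
    intro m
    cases m with
    | zero =>
      rw [ChainComplex.quasiIsoAt₀_iff, ShortComplex.quasiIso_iff_of_zeros' _ rfl rfl rfl]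
      constructor
      · rw [ShortComplex.moduleCat_exact_iff]
        intro x hx
        have h1 : p x = 0 := by
          have : π.f 0 = p := by simp [π]
          rw [← this]; exact hx
        obtain ⟨y, hy⟩ := (h0 x).1 h1
        refine ⟨y, ?_⟩
        have := congrArg (fun f => (ConcreteCategory.hom f) y) (hK 0)
        exact this.trans hy
      · rw [ModuleCat.epi_iff_surjective]
        have : π.f 0 = p := by simp [π]
        change Function.Surjective (π.f 0)
        rw [this]; exact hp
    | succ m =>
      rw [quasiIsoAt_iff_exactAt' (hL := ChainComplex.exactAt_succ_single_obj ..),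
          HomologicalComplex.exactAt_iff' _ (m + 2) (m + 1) m (by simp) (by simp)]
      rw [ShortComplex.moduleCat_exact_iff]
      intro x hx
      have e1 := congrArg (fun f => (ConcreteCategory.hom f) x) (hK m)
      obtain ⟨y, hy⟩ := (hex m x).1 (e1.symm.trans hx)
      refine ⟨y, ?_⟩
      exact (congrArg (fun f => (ConcreteCategory.hom f) y) (hK (m + 1))).trans hy
  let P : ProjectiveResolution Z :=
    { complex := K
      projective := hproj
      π := π
      quasiIso := hπ }
  let L := P.complex.linearYonedaObj ℂ Z
  have hd : ∀ i j, L.d i j = 0 := by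
    intro i j
    by_cases hij : i + 1 = j
    · subst hij
      ext f
      change K.d (i + 1) i ≫ f = 0
      rw [hK]
      exact hz i f
    · exact L.shape _ _ hij
  have e2 : L.homology m ≅ L.X m :=
    (ShortComplex.HomologyData.ofZeros (L.sc m) (hd _ _) (hd _ _)).left.homologyIso
  exact ⟨P.isoExt m Z ≪≫ e2⟩

open Polynomial

abbrev VV := ℂ[X] × ℂ[X] × ℂ[X] × ℂ[X]

noncomputable def opA : VV →ₗ[ℂ] VV where
  toFun q := (q.1 * X, -(q.2.1 * X), q.2.1 - q.2.2.1 * X, q.2.2.2 * X)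
  map_add' p q := by ext1 <;> [skip; ext1 <;> [skip; ext1]] <;> simp <;> ring
  map_smul' r q := by simp [smul_sub]

noncomputable def opB : VV →ₗ[ℂ] VV where
  toFun q := (0, q.1, 0, q.2.2.1)
  map_add' p q := by simp
  map_smul' r q := by simp

noncomputable def opC : VV →ₗ[ℂ] VV where
  toFun q := (0, 0, q.1, q.2.1)
  map_add' p q := by simp
  map_smul' r q := by simp

noncomputable def gens : Fin 3 → (Module.End ℂ VV)ᵐᵒᵖ :=
  ![MulOpposite.op opA, MulOpposite.op opB, MulOpposite.op opC]

noncomputable def act : RingQuot CRel →ₐ[ℂ] (Module.End ℂ VV)ᵐᵒᵖ :=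
  RingQuot.liftAlgHom ℂ ⟨FreeAlgebra.lift ℂ gens, by
    intro x y h
    apply MulOpposite.unop_injective
    induction h <;> ext1 <;>
      simp [gens] <;> (try ext q) <;> simp [opA, opB, opC]⟩

abbrev RR := RingQuot CRel
noncomputable def ga : RR := RingQuot.mkAlgHom ℂ CRel (ι ℂ 0)
noncomputable def gb : RR := RingQuot.mkAlgHom ℂ CRel (ι ℂ 1)
noncomputable def gc : RR := RingQuot.mkAlgHom ℂ CRel (ι ℂ 2)

theorem act_a : act ga = MulOpposite.op opA := by simp [act, ga, gens]
theorem act_b : act gb = MulOpposite.op opB := by simp [act, gb, gens]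
theorem act_c : act gc = MulOpposite.op opC := by simp [act, gc, gens]

structure Rels {S : Type} [Ring S] [Algebra ℂ S] (a b c : S) : Prop where
  ba : b * a = c - a * b
  ca : c * a = -(a * c)
  cb : c * b = b * c
  bb : b * b = 0
  cc : c * c = 0

theorem rels : Rels ga gb gc where
  ba := by
    rw [eq_sub_iff_add_eq']
    simpa [ga, gb, gc] using RingQuot.mkAlgHom_rel ℂ CRel.r12
  ca := by
    rw [eq_neg_iff_add_eq_zero, add_comm]
    simpa [ga, gb, gc] using RingQuot.mkAlgHom_rel ℂ CRel.r13
  cb := by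
    rw [eq_comm, ← sub_eq_zero]
    simpa [ga, gb, gc] using RingQuot.mkAlgHom_rel ℂ CRel.r23
  bb := by
    simpa [ga, gb, gc] using RingQuot.mkAlgHom_rel ℂ CRel.r22
  cc := by
    simpa [ga, gb, gc] using RingQuot.mkAlgHom_rel ℂ CRel.r33

section generic
variable {S : Type} [Ring S] [Algebra ℂ S] {a b c : S}

noncomputable def psi (a b c : S) : VV →ₗ[ℂ] S where
  toFun q := aeval a q.1 + aeval a q.2.1 * b + aeval a q.2.2.1 * c + aeval a q.2.2.2 * (b * c)
  map_add' p q := by simp only [Prod.fst_add, Prod.snd_add, map_add, add_mul]; abel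
  map_smul' r q := by simp

theorem psi_def (a b c : S) (p q r s : ℂ[X]) :
  psi a b c (p, q, r, s) = aeval a p + aeval a q * b + aeval a r * c + aeval a s * (b * c) := rfl

theorem psi_b (H : Rels a b c) (p q r s : ℂ[X]) :
    psi a b c (p, q, r, s) * b = psi a b c (0, p, 0, r) := by
  simp only [psi_def, add_mul, mul_assoc, H.bb, H.cb]
  simp [← mul_assoc, H.bb]

theorem psi_c (H : Rels a b c) (p q r s : ℂ[X]) :
    psi a b c (p, q, r, s) * c = psi a b c (0, 0, p, q) := by
  simp only [psi_def, add_mul, mul_assoc, H.cc]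
  simp

theorem psi_a (H : Rels a b c) (p q r s : ℂ[X]) :
    psi a b c (p, q, r, s) * a = psi a b c (p * X, -(q * X), q - r * X, s * X) := by
  have h : b * c * a = a * (b * c) := by
    rw [mul_assoc, H.ca, mul_neg, ← mul_assoc, H.ba, sub_mul, H.cc, zero_sub, neg_neg, mul_assoc]
  simp only [psi_def, add_mul]
  rw [mul_assoc _ b a, mul_assoc _ c a, mul_assoc _ (b * c) a, h, H.ba, H.ca]
  simp only [map_mul, map_neg, map_sub, aeval_X]
  noncomm_ring

theorem psi_a_pow (H : Rels a b c) (n : ℕ) (p q r s : ℂ[X]) :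
    psi a b c (p, q, r, s) * a ^ (n + 1) =
    psi a b c (p * X ^ (n + 1), (-1) ^ (n + 1) * q * X ^ (n + 1),
      (-1) ^ (n + 1) * r * X ^ (n + 1) - ((n : ℂ[X]) + 1) * (-1) ^ (n + 1) * q * X ^ n,
      s * X ^ (n + 1)) := by
  induction n with
  | zero => simp [psi_a H]; ring_nf
  | succ n ih =>
    rw [pow_succ, ← mul_assoc, ih, psi_a H]
    congr 1
    ext1 <;> [skip; ext1 <;> [skip; ext1]] <;> simp <;> ring

theorem psi_w (H : Rels a b c) (m : ℂ) (p q r s : ℂ[X]) :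
    psi a b c (p, q, r, s) * (algebraMap ℂ S m * c + a * b) =
    psi a b c (0, p * X, C m * p, (C m + 1) * q - r * X) := by
  have : psi a b c (p, q, r, s) * (algebraMap ℂ S m * c + a * b) =
    m • (psi a b c (p, q, r, s) * c) + psi a b c (p, q, r, s) * a * b := by
    rw [mul_add, ← mul_assoc, ← mul_assoc, ← Algebra.commutes, mul_assoc, Algebra.smul_def]
  rw [this, psi_c H, psi_a H, psi_b H, ← map_smul, ← map_add]
  congr 1
  ext1 <;> [skip; ext1 <;> [skip; ext1]] <;> simp [smul_eq_C_mul] <;> ring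

/-- degree `1 → 0` differential -/
def dz (a b : S) : S × S →ₗ[S] S where
  toFun x := x.1 * b + x.2 * a
  map_add' x y := by simp [add_mul]; abel
  map_smul' r x := by simp [mul_assoc, mul_add]

/-- degree `n + 2 → n + 1` differential -/
noncomputable def ds (a b c : S) (n : ℕ) : S × S →ₗ[S] S × S where
  toFun x := (x.1 * b + x.2 * a ^ (n + 2),
    x.2 * (algebraMap ℂ S ((-1) ^ n) * (algebraMap ℂ S (n + 1) * c + a * b)))
  map_add' x y := by simp [add_mul]; abel
  map_smul' r x := by simp [mul_assoc, mul_add]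

theorem ds_psi (H : Rels a b c) (n : ℕ) (p q : VV) :
    ds a b c n (psi a b c p, psi a b c q) =
    (psi a b c (q.1 * X ^ (n + 2), p.1 + (-1) ^ n * q.2.1 * X ^ (n + 2),
      (-1) ^ n * q.2.2.1 * X ^ (n + 2) - ((n : ℂ[X]) + 2) * (-1) ^ n * q.2.1 * X ^ (n + 1),
      p.2.2.1 + q.2.2.2 * X ^ (n + 2)),
     psi a b c (0, (-1) ^ n * (q.1 * X), (-1) ^ n * (((n : ℂ[X]) + 1) * q.1),
      (-1) ^ n * (((n : ℂ[X]) + 2) * q.2.1 - q.2.2.1 * X))) := by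
  obtain ⟨p0, p1, p2, p3⟩ := p
  obtain ⟨q0, q1, q2, q3⟩ := q
  have h : ∀ x y : S, x * (algebraMap ℂ S ((-1) ^ n) * y) = ((-1) ^ n : ℂ) • (x * y) := by
    intro x y
    rw [← mul_assoc, ← Algebra.commutes, mul_assoc, Algebra.smul_def]
  simp only [ds, LinearMap.coe_mk, AddHom.coe_mk]
  rw [h, psi_b H, psi_a_pow H, psi_w H, ← map_smul, ← map_add]
  congr 2
  · ext1 <;> [skip; ext1 <;> [skip; ext1]] <;> simp [-mul_eq_mul_right_iff] <;> ring
  · ext1 <;> [skip; ext1 <;> [skip; ext1]] <;> simp [smul_eq_C_mul, -mul_eq_mul_left_iff,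
      -mul_eq_mul_right_iff] <;> ring

theorem dz_psi (H : Rels a b c) (p q : VV) :
    dz a b (psi a b c p, psi a b c q) =
    psi a b c (q.1 * X, p.1 - q.2.1 * X, q.2.1 - q.2.2.1 * X,
      p.2.2.1 + q.2.2.2 * X) := by
  obtain ⟨p0, p1, p2, p3⟩ := p
  obtain ⟨q0, q1, q2, q3⟩ := q
  simp only [dz, LinearMap.coe_mk, AddHom.coe_mk]
  rw [psi_b H, psi_a H, ← map_add]
  congr 1
  ext1 <;> [skip; ext1 <;> [skip; ext1]] <;> simp <;> ring

theorem neg_one_sq_pow (n : ℕ) : ((-1) ^ n : ℂ[X]) * (-1) ^ n = 1 := by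
  rw [← mul_pow]; simp

theorem natC (n k : ℕ) : C (((n : ℂ) + (k + 1))⁻¹) * ((n : ℂ[X]) + (k + 1)) = 1 := by
  have h : ((n : ℂ) + (k + 1)) ≠ 0 := by exact_mod_cast (Nat.succ_ne_zero (n + k))
  have : ((n : ℂ[X]) + (k + 1)) = C ((n : ℂ) + (k + 1)) := by simp
  rw [this, ← C_mul, inv_mul_cancel₀ h, C_1]

theorem exact_s (H : Rels a b c) (hi : Function.Injective (psi a b c))
    (hs : Function.Surjective (psi a b c)) (n : ℕ) :
    Function.Exact (ds a b c (n + 1)) (ds a b c n) := by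
  rintro ⟨x, y⟩
  obtain ⟨⟨p0, p1, p2, p3⟩, rfl⟩ := hs x
  obtain ⟨⟨q0, q1, q2, q3⟩, rfl⟩ := hs y
  have hsq := neg_one_sq_pow n
  constructor
  · intro h
    rw [ds_psi H, Prod.mk_eq_zero, map_eq_zero_iff _ hi, map_eq_zero_iff _ hi] at h
    simp only [Prod.mk_eq_zero] at h
    obtain ⟨⟨h1, h2, h3, h4⟩, h5, h6, h7, h8⟩ := h
    have hq0 : q0 = 0 := by
      rcases mul_eq_zero.1 h1 with h | h
      · exact h
      · exact absurd h (pow_ne_zero _ X_ne_zero)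
    have k2 := natC n 1
    have k3 := natC n 2
    set i2 := C (((n : ℂ) + ((1 : ℕ) + 1))⁻¹)
    set i3 := C (((n : ℂ) + ((2 : ℕ) + 1))⁻¹)
    push_cast at k2 k3
    have h9 : ((n : ℂ[X]) + 2) * q1 = q2 * X := by
      linear_combination (-1) ^ n * h8 - (((n : ℂ[X]) + 2) * q1 - q2 * X) * hsq
    have h10 : q1 = i2 * q2 * X := by
      linear_combination i2 * h9 - q1 * k2
    refine ⟨(psi a b c (p1 - i3 * q3 * X ^ (n + 3), 0, p3, 0),
      psi a b c ((-1) ^ (n + 1) * i2 * q2, (-1) ^ (n + 1) * i3 * q3, 0, 0)), ?_⟩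
    rw [ds_psi H]
    congr 2
    · ext1 <;> [skip; ext1 <;> [skip; ext1]] <;> simp only
      · linear_combination - h2 + (-1) ^ n * X ^ (n + 2) * h10
      · linear_combination (i3 * q3 * X ^ (n + 3)) * hsq
      · push_cast
        linear_combination - h4 - q3 * X ^ (n + 2) * k3
          - q3 * X ^ (n + 2) * (n + 3) * i3 * hsq
      · ring
    · ext1 <;> [skip; ext1 <;> [skip; ext1]] <;> simp only
      · exact hq0.symm
      · linear_combination i2 * q2 * X * hsq - h10
      · push_cast
        linear_combination (n + 2) * i2 * q2 * hsq + q2 * k2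
      · push_cast
        linear_combination (n + 3) * i3 * q3 * hsq + q3 * k3
  · rintro ⟨⟨u, v⟩, h⟩
    obtain ⟨⟨u0, u1, u2, u3⟩, rfl⟩ := hs u
    obtain ⟨⟨v0, v1, v2, v3⟩, rfl⟩ := hs v
    rw [← h, ds_psi H, ds_psi H, Prod.mk_eq_zero, map_eq_zero_iff _ hi, map_eq_zero_iff _ hi]
    simp only [Prod.mk_eq_zero]
    push_cast
    refine ⟨⟨?_, ?_, ?_, ?_⟩, ?_, ?_, ?_, ?_⟩
    · ring
    · linear_combination - v0 * X ^ (n + 3) * hsq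
    · linear_combination 0 * hsq
    · linear_combination 0 * hsq
    · trivial
    · ring
    · ring
    · ring

theorem exact_z (H : Rels a b c) (hi : Function.Injective (psi a b c))
    (hs : Function.Surjective (psi a b c)) :
    Function.Exact (ds a b c 0) (dz a b) := by
  rintro ⟨x, y⟩
  obtain ⟨⟨p0, p1, p2, p3⟩, rfl⟩ := hs x
  obtain ⟨⟨q0, q1, q2, q3⟩, rfl⟩ := hs y
  constructor
  · intro h
    rw [dz_psi H, map_eq_zero_iff _ hi] at h
    simp only [Prod.mk_eq_zero] at h
    obtain ⟨h1, h2, h3, h4⟩ := h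
    have hq0 : q0 = 0 := by
      rcases mul_eq_zero.1 h1 with h | h
      · exact h
      · exact absurd h X_ne_zero
    have k2 := natC 0 1
    set i2 := C ((((0 : ℕ) : ℂ) + ((1 : ℕ) + 1))⁻¹)
    push_cast at k2
    refine ⟨(psi a b c (p1 - i2 * q3 * X ^ 2, 0, p3, 0), psi a b c (q2, i2 * q3, 0, 0)), ?_⟩
    rw [ds_psi H]
    congr 2
    · ext1 <;> [skip; ext1 <;> [skip; ext1]] <;> simp only <;> push_cast
      · linear_combination - h2 - X * h3
      · ring
      · linear_combination - h4 - q3 * X * k2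
      · ring
    · ext1 <;> [skip; ext1 <;> [skip; ext1]] <;> simp only <;> push_cast
      · exact hq0.symm
      · linear_combination - h3
      · ring
      · linear_combination q3 * k2
  · rintro ⟨⟨u, v⟩, h⟩
    obtain ⟨⟨u0, u1, u2, u3⟩, rfl⟩ := hs u
    obtain ⟨⟨v0, v1, v2, v3⟩, rfl⟩ := hs v
    rw [← h, ds_psi H, dz_psi H, map_eq_zero_iff _ hi]
    simp only [Prod.mk_eq_zero]
    push_cast
    refine ⟨?_, ?_, ?_, ?_⟩ <;> ring

theorem eps_psi (ε : S →ₐ[ℂ] ℂ) (ha : ε a = 0) (hb : ε b = 0) (hc : ε c = 0) (p q r s : ℂ[X]) :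
    ε (psi a b c (p, q, r, s)) = p.coeff 0 := by
  simp only [psi_def, map_add, map_mul, hb, hc, mul_zero, add_zero]
  rw [← aeval_algHom_apply, ha, coeff_zero_eq_aeval_zero]

theorem exact_e (H : Rels a b c) (hs : Function.Surjective (psi a b c))
    (ε : S →ₐ[ℂ] ℂ) (ha : ε a = 0) (hb : ε b = 0) (hc : ε c = 0) :
    Function.Exact (dz a b) ε := by
  intro x
  obtain ⟨⟨p0, p1, p2, p3⟩, rfl⟩ := hs x
  constructor
  · intro h
    rw [eps_psi ε ha hb hc] at h
    refine ⟨(psi a b c (p1 + p2 * X, 0, p3, 0), psi a b c (p0.divX, p2, 0, 0)), ?_⟩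
    rw [dz_psi H]
    congr 1
    ext1 <;> [skip; ext1 <;> [skip; ext1]] <;> simp only
    · have := divX_mul_X_add p0
      rw [h, C_0, add_zero] at this
      exact this
    · ring
    · ring
    · ring
  · rintro ⟨⟨u, v⟩, h⟩
    rw [← h]
    simp [dz, ha, hb]

end generic

theorem act_pa (p q : ℂ[X]) : (act (aeval ga p)).unop (q, 0, 0, 0) = (q * p, 0, 0, 0) := by
  induction p using Polynomial.induction_on' generalizing q with
  | add p r hp hr => simp [hp, hr, mul_add]
  | monomial n c =>
    rw [← C_mul_X_pow_eq_monomial]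
    simp only [map_mul, aeval_C, map_pow, aeval_X, act_a, AlgHom.commutes, MulOpposite.unop_mul,
      MulOpposite.unop_pow, MulOpposite.unop_op]
    have h : ∀ (n : ℕ) (q : ℂ[X]), (opA ^ n) (q, 0, 0, 0) = (q * X ^ n, 0, 0, 0) := by
      intro n
      induction n with
      | zero => simp
      | succ n ih =>
        intro q
        rw [pow_succ', Module.End.mul_apply, ih]
        simp [opA, pow_succ, mul_assoc]
    simp only [Module.End.mul_apply]
    rw [MulOpposite.algebraMap_apply]
    simp [h, Module.algebraMap_end_apply, Algebra.smul_def]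
    ring

theorem act_psi (q : VV) : (act (psi ga gb gc q)).unop (1, 0, 0, 0) = q := by
  obtain ⟨p, q, r, s⟩ := q
  simp [psi_def, act_pa, act_b, act_c, opB, opC]

theorem psi_inj : Function.Injective (psi ga gb gc) := fun p q h => by
  rw [← act_psi p, h, act_psi]

theorem psi_surj : Function.Surjective (psi ga gb gc) := by
  have key : ∀ (x : FreeAlgebra ℂ (Fin 3)) (v : VV), ∃ w,
      psi ga gb gc w = psi ga gb gc v * RingQuot.mkAlgHom ℂ CRel x := by
    intro x
    induction x using FreeAlgebra.induction with
    | grade0 r =>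
      intro v
      refine ⟨r • v, ?_⟩
      rw [AlgHom.commutes, map_smul, Algebra.smul_def, Algebra.commutes]
    | grade1 i =>
      rintro ⟨p, q, r, s⟩
      fin_cases i
      · exact ⟨_, (psi_a rels p q r s).symm⟩
      · exact ⟨_, (psi_b rels p q r s).symm⟩
      · exact ⟨_, (psi_c rels p q r s).symm⟩
    | mul x y hx hy =>
      intro v
      obtain ⟨w, hw⟩ := hx v
      obtain ⟨u, hu⟩ := hy w
      exact ⟨u, by rw [hu, hw, map_mul, mul_assoc]⟩
    | add x y hx hy =>
      intro v
      obtain ⟨w, hw⟩ := hx v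
      obtain ⟨u, hu⟩ := hy v
      exact ⟨w + u, by rw [map_add, hu, hw, map_add, mul_add]⟩
  intro r
  obtain ⟨x, rfl⟩ := RingQuot.mkAlgHom_surjective ℂ CRel r
  obtain ⟨w, hw⟩ := key x (1, 0, 0, 0)
  exact ⟨w, by rw [hw]; simp [psi_def]⟩

section final
variable {S : Type} [Ring S] [Algebra ℂ S] {a b c : S}

/-- The modules of the minimal resolution. -/
abbrev resX (S : Type) [Ring S] : ℕ → ModuleCat.{0} S
  | 0 => ModuleCat.of S S
  | _ + 1 => ModuleCat.of S (S × S)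

/-- The differentials of the minimal resolution. -/
noncomputable abbrev resD (a b c : S) : ∀ n, resX S (n + 1) ⟶ resX S n
  | 0 => ModuleCat.ofHom (dz a b)
  | n + 1 => ModuleCat.ofHom (ds a b c n)

theorem dims (H : Rels a b c) (hi : Function.Injective (psi a b c))
    (hs : Function.Surjective (psi a b c))
    (ε : S →ₐ[ℂ] ℂ) (ha : ε a = 0) (hb : ε b = 0) (hc : ε c = 0) :
    extDim S ε 0 = 1 ∧ ∀ n, extDim S ε (n + 1) = 2 := by
  letI : Module S ℂ := Module.compHom ℂ ε.toRingHom
  have hsm : ∀ (s : S) (z : ℂ), s • z = ε s * z := fun _ _ => rfl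
  let Z : ModuleCat.{0} S := ModuleCat.of S ℂ
  let p : resX S 0 ⟶ Z := ModuleCat.ofHom
    { toFun := fun s => ε s
      map_add' := map_add ε
      map_smul' := fun s t => by simp [hsm] }
  have hsmul : ∀ (r : ℂ) (n : ℕ) (f : resX S n ⟶ Z) (x : resX S n),
      ((r • f) x : ℂ) = r * (f x : ℂ) := by
    intro r n f x
    change algebraMap ℂ S r • (f x : ℂ) = _
    rw [hsm, AlgHom.commutes]; rfl
  have hlin : ∀ (f : S →ₗ[S] ℂ) (x : S), f x = ε x * f 1 := fun f x => by
    rw [← hsm, ← map_smul, smul_eq_mul, mul_one]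
  have hlin2 : ∀ (f : S × S →ₗ[S] ℂ) (x : S × S), f x = ε x.1 * f (1, 0) + ε x.2 * f (0, 1) := by
    intro f x
    rw [← hsm, ← hsm, ← map_smul, ← map_smul, ← map_add]
    simp
  have key := ext_of_minimal Z (resX S)
    (fun n => by
      cases n with
      | zero => exact (IsProjective.iff_projective (R := S) S).1 inferInstance
      | succ n => exact (IsProjective.iff_projective (R := S) (S × S)).1 inferInstance)
    (resD a b c) p
    (fun z => ⟨algebraMap ℂ S z, ε.commutes z⟩)
    (exact_e H hs ε ha hb hc)
    (fun n => by
      cases n with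
      | zero => exact exact_z H hi hs
      | succ n => exact exact_s H hi hs n)
    (fun n f => by
      cases n with
      | zero =>
        ext1
        refine LinearMap.ext fun x => ?_
        refine (hlin f.hom (dz a b x)).trans ?_
        simp [dz, ha, hb]
      | succ n =>
        ext1
        refine LinearMap.ext fun x => ?_
        refine (hlin2 f.hom (ds a b c n x)).trans ?_
        simp [ds, ha, hb, hc])
  constructor
  · obtain ⟨e⟩ := key 0
    have e0 : (resX S 0 ⟶ Z) ≃ₗ[ℂ] ℂ :=
      { toFun := fun f => f.hom (1 : S)
        map_add' := fun f g => rfl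
        map_smul' := fun r f => hsmul r 0 f (1 : S)
        invFun := fun z => ModuleCat.ofHom (LinearMap.toSpanSingleton S ℂ z)
        left_inv := fun f => by
          ext1
          refine LinearMap.ext fun x => ?_
          exact (hlin f.hom x).symm
        right_inv := fun z => by
          change (1 : S) • z = z
          simp }
    have h := (e.toLinearEquiv.trans e0).finrank_eq
    rw [Module.finrank_self] at h
    exact h
  · intro n
    obtain ⟨e⟩ := key (n + 1)
    have e0 : (resX S (n + 1) ⟶ Z) ≃ₗ[ℂ] ℂ × ℂ :=
      { toFun := fun f => (f.hom ((1, 0) : S × S), f.hom ((0, 1) : S × S))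
        map_add' := fun f g => rfl
        map_smul' := fun r f => Prod.ext (hsmul r (n + 1) f ((1, 0) : S × S))
          (hsmul r (n + 1) f ((0, 1) : S × S))
        invFun := fun z => ModuleCat.ofHom
          ((LinearMap.toSpanSingleton S ℂ z.1).coprod (LinearMap.toSpanSingleton S ℂ z.2))
        left_inv := fun f => by
          ext1
          refine LinearMap.ext fun x => ?_
          exact (hlin2 f.hom x).symm
        right_inv := fun z => by
          refine Prod.ext ?_ ?_
          · change (1 : S) • z.1 + (0 : S) • z.2 = z.1
            simp
          · change (0 : S) • z.1 + (1 : S) • z.2 = z.2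
            simp }
    have h := (e.toLinearEquiv.trans e0).finrank_eq
    rw [Module.finrank_prod, Module.finrank_self] at h
    exact h

end final

theorem betti_numbers (ε : RingQuot CRel →ₐ[ℂ] ℂ)
    (hε : ∀ i : Fin 3, ε (RingQuot.mkAlgHom ℂ CRel (ι ℂ i)) = 0) :
    (extDim (RingQuot CRel) ε 0 = 1 ∧ ∀ n ≥ 1, extDim (RingQuot CRel) ε n = 2) ∧
    (PowerSeries.mk fun n => (extDim (RingQuot CRel) ε n : ℚ)) * (1 - PowerSeries.X) =
      1 + PowerSeries.X := by
  obtain ⟨h0, h1⟩ := dims rels psi_inj psi_surj ε (hε 0) (hε 1) (hε 2)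
  refine ⟨⟨h0, fun n hn => ?_⟩, ?_⟩
  · obtain ⟨m, rfl⟩ := Nat.exists_eq_add_of_le' hn
    exact h1 m
  · ext n
    rw [mul_sub, mul_one, map_sub, map_add]
    match n with
    | 0 => simp [h0]
    | 1 => 
      rw [PowerSeries.coeff_succ_mul_X]
      simp [h0, h1, PowerSeries.coeff_one]; norm_num
    | n + 2 => 
      rw [PowerSeries.coeff_succ_mul_X]
      simp [h1, PowerSeries.coeff_one, PowerSeries.coeff_X]
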